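/- For x > 0, the function Φ(x) = ∑_{n=1}^∞ n^{(n+2)/2} x^n / n! satisfies the enclosure √(e/π) · x · Ψ(x√(2e)) ≤ Φ(x) ≤ x · Ψ(x√(2e)), where Ψ(z) = 1 + (√π/2) z e^{z²/4} (1 + erf(z/2)). -/

import Mathlib

/-- The error function erf(z) = (2/√π) ∫₀^z e^{-t²} dt. -/
noncomputable def erf (z : ℝ) : ℝ := 2 / Real.sqrt Real.pi * ∫ t in (0:ℝ)..z, Real.exp (-t ^ 2)

/-- Ψ(z) = 1 + (√π/2) z e^{z²/4} (1 + erf(z/2)). -/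
noncomputable def Psi (z : ℝ) : ℝ :=
  1 + Real.sqrt Real.pi / 2 * z * Real.exp (z ^ 2 / 4) * (1 + erf (z / 2))

/-- Φ(x) = ∑_{n≥1} n^{(n+2)/2} x^n / n!. -/
noncomputable def Phi (x : ℝ) : ℝ :=
  ∑' n : ℕ, (n : ℝ) ^ (((n : ℝ) + 2) / 2) * x ^ n / (Nat.factorial n : ℝ)

/-!
Expanding `exp (z t)` under the integral in `Ψ(z) = ∫₀^∞ 2 t exp (z t - t²) dt` shows that `Ψ` has
the Taylor coefficients `Γ(n/2 + 1) / n!`. Hence the coefficient of `xⁿ` in `Ψ(x √(2e))`, divided by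
the coefficient `(n + 1)^((n + 1)/2) / n!` of `xⁿ` in `Φ(x) / x`, is `R((n + 1)/2) / √(2e)` with
`R(s) = Γ(s + 1/2) / (s / e)^s`. The function `R` is increasing: its increments
`log R(s + 1) - log R(s)` decrease in `s`, so `log R(t + k) - log R(s + k)` decreases in `k` when
`s ≤ t`, and it tends to `0` by Stirling's formula. Thus `√(2e) = R(1/2) ≤ R(s) ≤ √(2π)` for
`s ≥ 1/2`, and the enclosure holds term by term.
-/

section

open MeasureTheory Set Filter Topology Real
open scoped Nat

@[simp]
lemma erf_neg (z : ℝ) : erf (-z) = -erf z := by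
  have h := intervalIntegral.integral_comp_neg (a := 0) (b := z) fun t : ℝ => exp (-t ^ 2)
  simp only [neg_sq, neg_zero] at h
  rw [erf, erf, h, intervalIntegral.integral_symm, mul_neg]

lemma hasDerivAt_erf (z : ℝ) : HasDerivAt erf (2 / √π * exp (-z ^ 2)) z :=
  have hc : Continuous fun t : ℝ => exp (-t ^ 2) := by fun_prop
  (hc.integral_hasStrictDerivAt 0 z).hasDerivAt.const_mul _

lemma tendsto_erf_atTop : Tendsto erf atTop (𝓝 1) := by
  have hint : Integrable fun t : ℝ => exp (-t ^ 2) := by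
    simpa using integrable_exp_neg_mul_sq one_pos
  have hval : ∫ t in Ioi (0 : ℝ), exp (-t ^ 2) = √π / 2 := by
    simpa using integral_gaussian_Ioi 1
  have h := (intervalIntegral_tendsto_integral_Ioi 0 hint.integrableOn tendsto_id).const_mul
    (2 / √π)
  rwa [hval, div_mul_div_cancel₀' two_ne_zero, div_self (by positivity)] at h

lemma tendsto_exp_mul_sub_sq_atTop (z : ℝ) :
    Tendsto (fun t : ℝ => exp (z * t - t ^ 2)) atTop (𝓝 0) := by
  have h : Tendsto (fun t : ℝ => t * (z - t)) atTop atBot :=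
    tendsto_id.atTop_mul_atBot₀ (tendsto_const_nhds.add_atBot tendsto_neg_atTop_atBot)
  exact tendsto_exp_atBot.comp (h.congr fun t => by ring)

lemma hasDerivAt_erf_sub_exp (z t : ℝ) :
    HasDerivAt (fun t => √π * z * exp (z ^ 2 / 4) / 2 * erf (t - z / 2) - exp (z * t - t ^ 2))
      (2 * t * exp (z * t - t ^ 2)) t := by
  have herf := (hasDerivAt_erf (t - z / 2)).comp_sub_const t (z / 2)
  have hexp : HasDerivAt (fun t => z * t - t ^ 2) (z - 2 * t) t := by
    simpa [Pi.sub_def] using ((hasDerivAt_id t).const_mul z).sub (hasDerivAt_pow 2 t)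
  have hsq : exp (z * t - t ^ 2) = exp (z ^ 2 / 4) * exp (-(t - z / 2) ^ 2) := by
    rw [← exp_add]
    ring_nf
  refine ((herf.const_mul _).sub hexp.exp).congr_deriv ?_
  rw [hsq]
  field_simp
  ring

lemma tendsto_erf_sub_exp_atTop (z : ℝ) :
    Tendsto (fun t => √π * z * exp (z ^ 2 / 4) / 2 * erf (t - z / 2) - exp (z * t - t ^ 2)) atTop
      (𝓝 (√π * z * exp (z ^ 2 / 4) / 2)) := by
  have herf := tendsto_erf_atTop.comp (tendsto_atTop_add_const_right atTop (-(z / 2)) tendsto_id)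
  simpa [sub_eq_add_neg] using (herf.const_mul _).sub (tendsto_exp_mul_sub_sq_atTop z)

lemma integrableOn_mul_exp_mul_sub_sq (z : ℝ) :
    IntegrableOn (fun t => 2 * t * exp (z * t - t ^ 2)) (Ioi 0) :=
  integrableOn_Ioi_deriv_of_nonneg' (fun t _ => hasDerivAt_erf_sub_exp z t)
    (fun t (ht : 0 < t) => by positivity) (tendsto_erf_sub_exp_atTop z)

lemma integral_mul_exp_mul_sub_sq (z : ℝ) :
    ∫ t in Ioi (0 : ℝ), 2 * t * exp (z * t - t ^ 2) = Psi z := by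
  rw [integral_Ioi_of_hasDerivAt_of_nonneg' (fun t _ => hasDerivAt_erf_sub_exp z t)
    (fun t (ht : 0 < t) => by positivity) (tendsto_erf_sub_exp_atTop z), zero_sub, erf_neg,
    mul_zero, zero_pow two_ne_zero, sub_zero, exp_zero, Psi]
  ring

lemma integral_pow_mul_exp_neg_sq (n : ℕ) :
    ∫ t in Ioi (0 : ℝ), t ^ n * exp (-t ^ 2) = Gamma (((n : ℝ) + 1) / 2) / 2 := by
  have h := integral_rpow_mul_exp_neg_rpow (p := 2) (q := n) two_pos
    (by linarith [n.cast_nonneg (α := ℝ)])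
  simp only [rpow_natCast, rpow_two] at h
  rw [h]
  ring

lemma hasSum_mul_exp_mul_sub_sq (z t : ℝ) :
    HasSum (fun n : ℕ => 2 * z ^ n / n ! * (t ^ (n + 1) * exp (-t ^ 2)))
      (2 * t * exp (z * t - t ^ 2)) := by
  have h := (NormedSpace.expSeries_div_hasSum_exp (z * t)).mul_left (2 * t * exp (-t ^ 2))
  rw [← exp_eq_exp_ℝ, mul_assoc (2 * t), ← exp_add, neg_add_eq_sub] at h
  exact h.congr_fun fun n => by ring

lemma hasSum_Psi (z : ℝ) :
    HasSum (fun n : ℕ => Gamma ((n : ℝ) / 2 + 1) / n ! * z ^ n) (Psi z) := by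
  have h := hasSum_integral_of_dominated_convergence (μ := volume.restrict (Ioi (0 : ℝ)))
    (F := fun n t => 2 * z ^ n / n ! * (t ^ (n + 1) * exp (-t ^ 2)))
    (fun n t => 2 * |z| ^ n / n ! * (t ^ (n + 1) * exp (-t ^ 2))) (fun n => by fun_prop)
    (fun n => (ae_restrict_mem measurableSet_Ioi).mono fun t (ht : 0 < t) => by
      simp [abs_of_pos ht])
    (.of_forall fun t => (hasSum_mul_exp_mul_sub_sq |z| t).summable)
    (by simpa only [(hasSum_mul_exp_mul_sub_sq |z| _).tsum_eq, IntegrableOn]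
      using integrableOn_mul_exp_mul_sub_sq |z|)
    (.of_forall (hasSum_mul_exp_mul_sub_sq z))
  rw [integral_mul_exp_mul_sub_sq] at h
  refine h.congr_fun fun n => ?_
  rw [integral_const_mul, integral_pow_mul_exp_neg_sq]
  push_cast
  ring_nf

lemma Gamma_add_natCast {s : ℝ} (hs : ∀ m : ℕ, s ≠ -m) (n : ℕ) :
    Gamma (s + n) = Gamma s * ∏ j ∈ Finset.range n, (s + j) := by
  induction n with
  | zero => simp
  | succ n ih =>
    have hsn : s + n ≠ 0 := fun h => hs n (eq_neg_of_add_eq_zero_left h)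
    rw [Finset.prod_range_succ, Nat.cast_succ, ← add_assoc, Gamma_add_one hsn, ih]
    ring

lemma tendsto_Gamma_add_natCast_div {s : ℝ} (hs : ∀ m : ℕ, s ≠ -m) :
    Tendsto (fun n : ℕ => Gamma (s + n) / ((n : ℝ) ^ s * Gamma n)) atTop (𝓝 1) := by
  have hΓ : Gamma s ≠ 0 := Gamma_ne_zero hs
  have h := ((tendsto_natCast_div_add_atTop s).div (GammaSeq_tendsto_Gamma s) hΓ).mul_const
    (Gamma s)
  rw [one_div_mul_cancel hΓ] at h
  refine h.congr' ?_
  filter_upwards [eventually_ne_atTop 0] with n hn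
  have hsn : s + n ≠ 0 := fun h => hs n (eq_neg_of_add_eq_zero_left h)
  have hn' : (n : ℝ) ≠ 0 := Nat.cast_ne_zero.2 hn
  rw [Pi.div_apply, GammaSeq, Finset.prod_range_succ, Gamma_add_natCast hs,
    ← Gamma_nat_eq_factorial, Gamma_add_one hn', add_comm (n : ℝ) s]
  have : Gamma n ≠ 0 := (Gamma_pos_of_pos (by positivity)).ne'
  field_simp

/-- The ratio `R(s)` of `Γ(s + 1/2)` to its Stirling approximation, normalized without the constant
`√(2π)` so that the latter is the limit of `R` at infinity. It measures the quotient of the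
coefficients of `Ψ` and `Φ`. -/
noncomputable def gammaRatio (s : ℝ) : ℝ := Gamma (s + 1 / 2) / (s / exp 1) ^ s

lemma gammaRatio_pos {s : ℝ} (hs : 0 < s) : 0 < gammaRatio s :=
  div_pos (Gamma_pos_of_pos (by positivity)) (by positivity)

lemma log_gammaRatio {s : ℝ} (hs : 0 < s) :
    log (gammaRatio s) = log (Gamma (s + 1 / 2)) - s * (log s - 1) := by
  have hΓ : Gamma (s + 1 / 2) ≠ 0 := (Gamma_pos_of_pos (by positivity)).ne'
  rw [gammaRatio, log_div hΓ (by positivity), log_rpow (by positivity),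
    log_div hs.ne' (exp_ne_zero 1), log_exp]

lemma log_gammaRatio_add_one_sub {s : ℝ} (hs : 0 < s) :
    log (gammaRatio (s + 1)) - log (gammaRatio s) =
      log (s + 1 / 2) + 1 + s * log s - (s + 1) * log (s + 1) := by
  have hΓ : Gamma (s + 1 / 2) ≠ 0 := (Gamma_pos_of_pos (by positivity)).ne'
  rw [log_gammaRatio hs, log_gammaRatio (by positivity), add_right_comm,
    Gamma_add_one (by positivity), log_mul (by positivity) hΓ]
  ring

lemma inv_add_half_le_log_sub_log {s : ℝ} (hs : 0 < s) :
    (s + 1 / 2)⁻¹ ≤ log (s + 1) - log s := by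
  have h := le_log_one_add_of_nonneg (inv_pos.2 hs).le
  rw [← log_div (by positivity) hs.ne']
  convert h using 1
  · field_simp
    ring
  · field_simp

lemma antitoneOn_log_gammaRatio_add_one_sub :
    AntitoneOn (fun s => log (gammaRatio (s + 1)) - log (gammaRatio s)) (Ioi 0) := by
  have hderiv : ∀ s ∈ Ioi (0 : ℝ), HasDerivAt
      (fun s => log (s + 1 / 2) + 1 + s * log s - (s + 1) * log (s + 1))
      ((s + 1 / 2)⁻¹ - (log (s + 1) - log s)) s := fun s (hs : 0 < s) => by
    have hhalf : HasDerivAt (fun s => log (s + 1 / 2)) (s + 1 / 2)⁻¹ s :=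
      (hasDerivAt_log (by positivity)).comp_add_const s (1 / 2)
    have hone : HasDerivAt (fun s => (s + 1) * log (s + 1)) (log (s + 1) + 1) s :=
      (hasDerivAt_mul_log (by positivity)).comp_add_const s 1
    refine (((hhalf.add_const 1).add (hasDerivAt_mul_log hs.ne')).sub hone).congr_deriv ?_
    ring
  refine AntitoneOn.congr ?_ fun s hs => (log_gammaRatio_add_one_sub hs).symm
  refine antitoneOn_of_hasDerivWithinAt_nonpos (convex_Ioi 0)
    (fun s hs => (hderiv s hs).continuousAt.continuousWithinAt)
    (fun s hs => (hderiv s (interior_subset hs)).hasDerivWithinAt)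
    (fun s hs => sub_nonpos.2 (inv_add_half_le_log_sub_log (interior_subset hs)))

lemma Gamma_natCast_eq_stirlingSeq_mul {n : ℕ} (hn : n ≠ 0) :
    Gamma n = Stirling.stirlingSeq n * √2 * (n / exp 1) ^ n / √n := by
  have hn' : (0 : ℝ) < n := by positivity
  have hfact : n * Gamma n = n ! := by rw [← Gamma_nat_eq_factorial, Gamma_add_one hn'.ne']
  rw [Stirling.stirlingSeq, ← hfact, sqrt_mul zero_le_two]
  field_simp
  rw [sq_sqrt hn'.le]

lemma gammaRatio_add_natCast {s : ℝ} (hs : 0 < s) {n : ℕ} (hn : n ≠ 0) :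
    gammaRatio (s + n) =
      Gamma (s + 1 / 2 + n) / ((n : ℝ) ^ (s + 1 / 2) * Gamma n) * Stirling.stirlingSeq n *
        (√2 * exp s / ((1 + s / n) ^ n * (1 + s / n) ^ s)) := by
  have hn' : (0 : ℝ) < n := by positivity
  have hStirling : Stirling.stirlingSeq n ≠ 0 := by
    unfold Stirling.stirlingSeq
    positivity
  have hpow : ((s + n) / exp 1) ^ (s + n) =
      (n / exp 1) ^ n * n ^ s / exp s * ((1 + s / n) ^ n * (1 + s / n) ^ s) := by
    rw [show (s + n) / exp 1 = n / exp 1 * (1 + s / n) by field_simp; ring,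
      rpow_add (by positivity), rpow_natCast, mul_pow, mul_rpow (by positivity) (by positivity),
      div_rpow hn'.le (exp_pos 1).le, ← exp_mul, one_mul]
    ring
  rw [gammaRatio, hpow, add_right_comm, Gamma_natCast_eq_stirlingSeq_mul hn,
    rpow_add hn', ← sqrt_eq_rpow]
  field_simp

lemma tendsto_gammaRatio_add_natCast {s : ℝ} (hs : 0 < s) :
    Tendsto (fun n : ℕ => gammaRatio (s + n)) atTop (𝓝 √(2 * π)) := by
  have hΓ := tendsto_Gamma_add_natCast_div (s := s + 1 / 2)
    fun m => by linarith [m.cast_nonneg (α := ℝ)]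
  have hbase : Tendsto (fun n : ℕ => (1 + s / n) ^ s) atTop (𝓝 1) := by
    simpa using ((tendsto_const_div_atTop_nhds_zero_nat s).const_add 1).rpow_const
      (p := s) (by simp)
  have hcorr := (tendsto_const_nhds (x := √2 * exp s)).div
    ((tendsto_one_add_div_pow_exp s).mul hbase) (by positivity)
  have h := (hΓ.mul Stirling.tendsto_stirlingSeq_sqrt_pi).mul hcorr
  rw [one_mul, mul_one, mul_div_cancel_right₀ _ (exp_ne_zero s), ← sqrt_mul pi_pos.le,
    mul_comm π] at h
  refine h.congr' ?_
  filter_upwards [eventually_ne_atTop 0] with n hn using (gammaRatio_add_natCast hs hn).symm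

lemma monotoneOn_gammaRatio : MonotoneOn gammaRatio (Ioi 0) := by
  intro s (hs : 0 < s) t (ht : 0 < t) hst
  have hanti : Antitone fun k : ℕ => log (gammaRatio (t + k)) - log (gammaRatio (s + k)) := by
    refine antitone_nat_of_succ_le fun k => ?_
    have h := antitoneOn_log_gammaRatio_add_one_sub (a := s + k) (b := t + k)
      (mem_Ioi.2 (by positivity)) (mem_Ioi.2 (by positivity)) (by gcongr)
    push_cast
    simp only [← add_assoc]
    linarith
  have hlim : Tendsto (fun k : ℕ => log (gammaRatio (t + k)) - log (gammaRatio (s + k))) atTop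
      (𝓝 0) := by
    have hpi : √(2 * π) ≠ 0 := by positivity
    simpa using ((tendsto_gammaRatio_add_natCast ht).log hpi).sub
      ((tendsto_gammaRatio_add_natCast hs).log hpi)
  have h := hanti.le_of_tendsto hlim 0
  rw [Nat.cast_zero, add_zero, add_zero, sub_nonneg] at h
  exact (log_le_log_iff (gammaRatio_pos hs) (gammaRatio_pos ht)).1 h

lemma gammaRatio_le_sqrt_two_mul_pi {s : ℝ} (hs : 0 < s) : gammaRatio s ≤ √(2 * π) :=
  ge_of_tendsto' (tendsto_gammaRatio_add_natCast hs) fun n =>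
    monotoneOn_gammaRatio hs (mem_Ioi.2 (by positivity)) (by simp)

lemma gammaRatio_one_half : gammaRatio (1 / 2) = √(2 * exp 1) := by
  rw [gammaRatio, add_halves, Gamma_one, ← sqrt_eq_rpow, one_div, ← sqrt_inv]
  congr 1
  field_simp

lemma sqrt_two_mul_exp_one_le_gammaRatio {s : ℝ} (hs : 1 / 2 ≤ s) :
    √(2 * exp 1) ≤ gammaRatio s := by
  rw [← gammaRatio_one_half]
  exact monotoneOn_gammaRatio (mem_Ioi.2 (by positivity)) (mem_Ioi.2 (by linarith)) hs

lemma Gamma_mul_sqrt_rpow {u : ℝ} (hu : -1 < u) :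
    Gamma (u / 2 + 1) * √(2 * exp 1) ^ u =
      gammaRatio ((u + 1) / 2) / √(2 * exp 1) * (u + 1) ^ ((u + 1) / 2) := by
  have hs : 0 < (u + 1) / 2 := by linarith
  have hpow : √(2 * exp 1) ^ u * √(2 * exp 1) * ((u + 1) / 2 / exp 1) ^ ((u + 1) / 2) =
      (u + 1) ^ ((u + 1) / 2) := by
    rw [← rpow_add_one (by positivity), sqrt_eq_rpow, ← rpow_mul (by positivity),
      one_div_mul_eq_div, ← mul_rpow (by positivity) (by positivity)]
    congr 1
    field_simp
  rw [gammaRatio, ← hpow, show (u + 1) / 2 + 1 / 2 = u / 2 + 1 by ring, div_div,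
    div_mul_eq_mul_div, eq_div_iff (by positivity)]
  ring

lemma rpow_le_Gamma_mul_sqrt_rpow {u : ℝ} (hu : 0 ≤ u) :
    (u + 1) ^ ((u + 1) / 2) ≤ Gamma (u / 2 + 1) * √(2 * exp 1) ^ u := by
  rw [Gamma_mul_sqrt_rpow (by linarith)]
  refine le_mul_of_one_le_left (by positivity) ((one_le_div (by positivity)).2 ?_)
  exact sqrt_two_mul_exp_one_le_gammaRatio (by linarith)

lemma mul_Gamma_mul_sqrt_rpow_le_rpow {u : ℝ} (hu : -1 < u) :
    √(exp 1 / π) * (Gamma (u / 2 + 1) * √(2 * exp 1) ^ u) ≤ (u + 1) ^ ((u + 1) / 2) := by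
  have hu' : 0 < u + 1 := by linarith
  have hsqrt : √(exp 1 / π) * √(2 * π) = √(2 * exp 1) := by
    rw [← sqrt_mul (by positivity)]
    congr 1
    field_simp
  rw [Gamma_mul_sqrt_rpow hu, ← mul_assoc, ← mul_div_assoc]
  refine mul_le_of_le_one_left (by positivity) ((div_le_one (by positivity)).2 ?_)
  rw [← hsqrt]
  gcongr
  exact gammaRatio_le_sqrt_two_mul_pi (by positivity)

lemma hasSum_mul_Psi (x : ℝ) :
    HasSum (fun n : ℕ => Gamma ((n : ℝ) / 2 + 1) * √(2 * exp 1) ^ (n : ℝ) * (x ^ (n + 1) / n !))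
      (x * Psi (x * √(2 * exp 1))) :=
  ((hasSum_Psi (x * √(2 * exp 1))).mul_left x).congr_fun fun n => by
    rw [rpow_natCast]
    ring

lemma hasSum_Phi (x : ℝ) :
    HasSum (fun n : ℕ => ((n : ℝ) + 1) ^ (((n : ℝ) + 1) / 2) * (x ^ (n + 1) / n !)) (Phi x) := by
  have hsummable : Summable fun n : ℕ =>
      ((n : ℝ) + 1) ^ (((n : ℝ) + 1) / 2) * (x ^ (n + 1) / n !) := by
    refine (hasSum_mul_Psi |x|).summable.of_norm_bounded fun n => ?_
    rw [norm_mul, norm_div, norm_pow, norm_natCast, norm_of_nonneg (by positivity), norm_eq_abs]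
    gcongr
    exact rpow_le_Gamma_mul_sqrt_rpow n.cast_nonneg
  have hshift : ∀ n : ℕ, ((n + 1 : ℕ) : ℝ) ^ ((((n + 1 : ℕ) : ℝ) + 2) / 2) * x ^ (n + 1) /
      (n + 1)! = ((n : ℝ) + 1) ^ (((n : ℝ) + 1) / 2) * (x ^ (n + 1) / n !) := fun n => by
    rw [Nat.factorial_succ, show (((n + 1 : ℕ) : ℝ) + 2) / 2 = ((n : ℝ) + 1) / 2 + 1 by
      push_cast; ring, rpow_add_one (by positivity)]
    push_cast
    field_simp
  rw [Phi, tsum_eq_zero_add' (by simpa only [hshift] using hsummable), tsum_congr hshift]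
  simpa using hsummable.hasSum

end

/-- For x > 0, the enclosure √(e/π)·x·Ψ(x√(2e)) ≤ Φ(x) ≤ x·Ψ(x√(2e)). -/
theorem stmt2 (x : ℝ) (hx : 0 < x) :
    Real.sqrt (Real.exp 1 / Real.pi) * x * Psi (x * Real.sqrt (2 * Real.exp 1)) ≤ Phi x ∧
      Phi x ≤ x * Psi (x * Real.sqrt (2 * Real.exp 1)) := by
  rw [mul_assoc]
  refine ⟨hasSum_le (fun n => ?_) ((hasSum_mul_Psi x).mul_left _) (hasSum_Phi x),
    hasSum_le (fun n => ?_) (hasSum_Phi x) (hasSum_mul_Psi x)⟩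
  · rw [← mul_assoc]
    gcongr
    exact mul_Gamma_mul_sqrt_rpow_le_rpow (by linarith [n.cast_nonneg (α := ℝ)])
  · gcongr
    exact rpow_le_Gamma_mul_sqrt_rpow n.cast_nonneg
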